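/- Let g be a finite-dimensional semisimple Lie algebra over a field of characteristic zero and M a finite-dimensional g-module. Then the first Lie algebra cohomology H^1(g, M) vanishes; equivalently, every derivation (1-cocycle) d : g → M satisfying d([x,y]) = x·d(y) − y·d(x) is of the form d(x) = x·m for some fixed m ∈ M. -/

import Mathlib

/-!
Inner derivations are the coboundaries, and they exhaust the derivations of `M` as soon as they do
so for a submodule and for the quotient by it; so `M` may be taken irreducible. If the trace form
of `M` vanishes, Cartan's criterion makes `M` nilpotent, hence trivial, and a derivation into a
trivial module kills `⁅L, L⁆ = L`. Otherwise the trace form is nondegenerate on an ideal `I ≠ 0`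
complementing its radical. The tensor `∑ i, eᵢ ⊗ eⁱ` of dual bases of `I` is invariant, and the
Casimir operator it defines has trace `dim I ≠ 0`, so it is invertible by Schur's lemma. As it
sends `D x` to `⁅x, ∑ i, ⁅eᵢ, D eⁱ⁆⁆`, inverting it shows that `D` is inner.
-/

open LieAlgebra LieModule Module TensorProduct

section Derivation

variable {R L M N : Type*} [CommRing R] [LieRing L] [LieAlgebra R L]
  [AddCommGroup M] [Module R M] [LieRingModule L M] [LieModule R L M]
  [AddCommGroup N] [Module R N] [LieRingModule L N] [LieModule R L N]

/-- The pushforward of a derivation along a homomorphism of Lie modules, i.e. the functoriality of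
1-cocycles in the coefficients. -/
def mapDerivation (f : M →ₗ⁅R,L⁆ N) (D : LieDerivation R L M) : LieDerivation R L N where
  toLinearMap := (f : M →ₗ[R] N) ∘ₗ D
  leibniz' x y := by simp

/-- A derivation all of whose values lie in a Lie submodule, as a derivation into it. -/
def codRestrictDerivation (P : LieSubmodule R L M) (D : LieDerivation R L M) (h : ∀ x, D x ∈ P) :
    LieDerivation R L P where
  toLinearMap := (D : L →ₗ[R] M).codRestrict P.toSubmodule h
  leibniz' x y := Subtype.ext <| D.apply_lie_eq_sub x y

theorem inner_surjective_of_quotient (P : LieSubmodule R L M)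
    (hP : Function.Surjective (LieDerivation.inner R L P))
    (hQ : Function.Surjective (LieDerivation.inner R L (M ⧸ P))) :
    Function.Surjective (LieDerivation.inner R L M) := by
  intro D
  obtain ⟨q, hq⟩ := hQ (mapDerivation (LieSubmodule.Quotient.mk' P) D)
  obtain ⟨m, rfl⟩ := LieSubmodule.Quotient.surjective_mk' P q
  have sub_mem (x : L) : (D - LieDerivation.inner R L M m) x ∈ P := by
    have mk_eq : ⁅x, LieSubmodule.Quotient.mk' P m⁆ = LieSubmodule.Quotient.mk' P (D x) :=
      LieDerivation.congr_fun hq x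
    rw [← LieModuleHom.map_lie] at mk_eq
    exact (Submodule.Quotient.eq P.toSubmodule).mp mk_eq.symm
  obtain ⟨p, hp⟩ := hP (codRestrictDerivation P _ sub_mem)
  refine ⟨p + m, LieDerivation.ext fun x ↦ ?_⟩
  have hpx : ⁅x, (p : M)⁆ = D x - ⁅x, m⁆ := congrArg Subtype.val (LieDerivation.congr_fun hp x)
  calc ⁅x, (p + m : M)⁆ = ⁅x, (p : M)⁆ + ⁅x, m⁆ := lie_add ..
    _ = D x := by rw [hpx, sub_add_cancel]

theorem derivation_eq_zero_of_isTrivial (hL : derivedSeries R L 1 = ⊤) [IsTrivial L M]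
    (D : LieDerivation R L M) : D = 0 := by
  have derived_le_ker : (derivedSeries R L 1).toSubmodule ≤ (D : L →ₗ[R] M).ker := by
    rw [derivedSeries_def, derivedSeriesOfIdeal_succ, derivedSeriesOfIdeal_zero,
      LieSubmodule.lieIdeal_oper_eq_linear_span', Submodule.span_le]
    rintro _ ⟨x, -, y, -, rfl⟩
    simp [trivial_lie_zero]
  ext x
  exact derived_le_ker (hL ▸ LieSubmodule.mem_top x)

end Derivation

section Casimir

variable {R L M : Type*} [CommRing R] [LieRing L] [LieAlgebra R L]
  [AddCommGroup M] [Module R M] [LieRingModule L M] [LieModule R L M]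

variable (M) in
/-- The operator `∑ i, aᵢ bᵢ` on `M` attached to the tensor `∑ i, aᵢ ⊗ bᵢ`; for the tensor of a
pair of dual bases it is the Casimir operator. -/
noncomputable def casimirOperator : L ⊗[R] L →ₗ[R] End R M :=
  lift <| (LinearMap.mul R (End R M)).compl₁₂ (toEnd R L M : L →ₗ[R] End R M) (toEnd R L M)

@[simp]
theorem casimirOperator_tmul_apply (a b : L) (m : M) :
    casimirOperator (R := R) M (a ⊗ₜ b) m = ⁅a, ⁅b, m⁆⁆ := rfl

/-- The vector `∑ i, ⁅aᵢ, D bᵢ⁆` attached to the tensor `∑ i, aᵢ ⊗ bᵢ` and a derivation `D`. -/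
noncomputable def casimirVector (D : LieDerivation R L M) : L ⊗[R] L →ₗ[R] M :=
  (toModuleHom R L M : L ⊗[R] M →ₗ[R] M) ∘ₗ (D : L →ₗ[R] M).lTensor L

@[simp]
theorem casimirVector_tmul (D : LieDerivation R L M) (a b : L) :
    casimirVector D (a ⊗ₜ b) = ⁅a, D b⁆ := by
  simp [casimirVector]

theorem lie_casimirVector (D : LieDerivation R L M) (x : L) (t : L ⊗[R] L) :
    ⁅x, casimirVector D t⁆ = casimirVector D ⁅x, t⁆ + casimirOperator M t (D x) := by
  induction t with
  | zero => simp
  | add s t hs ht => simp only [map_add, lie_add, LinearMap.add_apply, hs, ht]; abel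
  | tmul a b =>
    rw [TensorProduct.LieModule.lie_tmul_right, map_add]
    simp only [casimirVector_tmul, casimirOperator_tmul_apply, LieDerivation.apply_lie_eq_sub,
      lie_sub, leibniz_lie x a]
    abel

theorem casimirVector_inner (m : M) (t : L ⊗[R] L) :
    casimirVector (LieDerivation.inner R L M m) t = casimirOperator M t m := by
  induction t with
  | zero => simp
  | add s t hs ht => simp only [map_add, LinearMap.add_apply, hs, ht]
  | tmul a b => simp

theorem casimirOperator_lie {x : L} {t : L ⊗[R] L} (ht : ⁅x, t⁆ = 0) (m : M) :
    casimirOperator M t ⁅x, m⁆ = ⁅x, casimirOperator M t m⁆ := by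
  simpa [ht, casimirVector_inner] using (lie_casimirVector (LieDerivation.inner R L M m) x t).symm

variable (M) in
/-- The Casimir operator of an invariant tensor, as an endomorphism of the Lie module `M`. -/
noncomputable def casimirHom {t : L ⊗[R] L} (ht : ∀ x : L, ⁅x, t⁆ = 0) : M →ₗ⁅R,L⁆ M where
  toLinearMap := casimirOperator M t
  map_lie' {x m} := casimirOperator_lie (ht x) m

theorem trace_casimirOperator (t : L ⊗[R] L) :
    LinearMap.trace R M (casimirOperator M t) = lift (traceForm R L M) t := by
  induction t with
  | zero => simp
  | add s t hs ht => simp only [map_add, hs, ht]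
  | tmul a b => rfl

theorem trace_casimirOperator_mapIncl (I : LieIdeal R L) (t : I ⊗[R] I) :
    LinearMap.trace R M (casimirOperator M (TensorProduct.LieModule.mapIncl I I t)) =
      lift ((traceForm R L M).restrict I.toSubmodule) t := by
  rw [trace_casimirOperator]
  induction t with
  | zero => simp
  | add s t hs ht => simp only [map_add, hs, ht]
  | tmul a b => rfl

theorem inner_surjective_of_casimirOperator_bijective {t : L ⊗[R] L} (ht : ∀ x : L, ⁅x, t⁆ = 0)
    (hC : Function.Bijective (casimirOperator M t)) :
    Function.Surjective (LieDerivation.inner R L M) := by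
  intro D
  obtain ⟨m, hm⟩ := hC.surjective (casimirVector D t)
  refine ⟨m, LieDerivation.ext fun x ↦ hC.injective ?_⟩
  calc casimirOperator M t ⁅x, m⁆ = ⁅x, casimirVector D t⁆ := by
        rw [casimirOperator_lie (ht x), hm]
    _ = casimirOperator M t (D x) := by rw [lie_casimirVector, ht, map_zero, zero_add]

end Casimir

section InvariantTensor

variable {k L V : Type*} [Field k] [LieRing L] [LieAlgebra k L]
  [AddCommGroup V] [Module k V] [FiniteDimensional k V]

/-- The identification of `V ⊗ V` with `End V` given by a nondegenerate bilinear form `Φ`; it sends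
`a ⊗ b` to `v ↦ Φ a v • b`. -/
noncomputable def tensorEquivEnd (Φ : LinearMap.BilinForm k V) (hΦ : Φ.Nondegenerate) :
    V ⊗[k] V ≃ₗ[k] End k V :=
  TensorProduct.congr (Φ.toDual hΦ) (.refl k V) ≪≫ₗ dualTensorHomEquiv k V V

@[simp]
theorem tensorEquivEnd_tmul_apply (Φ : LinearMap.BilinForm k V) (hΦ : Φ.Nondegenerate)
    (a b v : V) : tensorEquivEnd Φ hΦ (a ⊗ₜ b) v = Φ a v • b := by
  simp [tensorEquivEnd, LinearMap.BilinForm.toDual_def]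

theorem trace_tensorEquivEnd (Φ : LinearMap.BilinForm k V) (hΦ : Φ.Nondegenerate)
    (t : V ⊗[k] V) : LinearMap.trace k V (tensorEquivEnd Φ hΦ t) = lift Φ t := by
  induction t with
  | zero => simp
  | add s t hs ht => simp only [map_add, hs, ht]
  | tmul a b => simp [tensorEquivEnd, LinearMap.BilinForm.toDual_def]

variable [LieRingModule L V] [LieModule k L V]

theorem tensorEquivEnd_lie {Φ : LinearMap.BilinForm k V} (hΦ : Φ.Nondegenerate)
    (hΦL : Φ.lieInvariant L) (x : L) (t : V ⊗[k] V) :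
    tensorEquivEnd Φ hΦ ⁅x, t⁆ = ⁅x, tensorEquivEnd Φ hΦ t⁆ := by
  induction t with
  | zero => simp
  | add s t hs ht => simp only [map_add, lie_add, hs, ht]
  | tmul a b =>
    ext v
    simp [TensorProduct.LieModule.lie_tmul_right, hΦL x a v, neg_add_eq_sub]

theorem exists_lie_eq_zero_and_lift_eq_finrank {Φ : LinearMap.BilinForm k V}
    (hΦ : Φ.Nondegenerate) (hΦL : Φ.lieInvariant L) :
    ∃ t : V ⊗[k] V, (∀ x : L, ⁅x, t⁆ = 0) ∧ lift Φ t = finrank k V := by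
  refine ⟨(tensorEquivEnd Φ hΦ).symm 1, fun x ↦ (tensorEquivEnd Φ hΦ).injective ?_, ?_⟩
  · rw [tensorEquivEnd_lie hΦ hΦL, LinearEquiv.apply_symm_apply, map_zero]
    ext v
    simp
  · rw [← trace_tensorEquivEnd Φ hΦ, LinearEquiv.apply_symm_apply, LinearMap.trace_one]

end InvariantTensor

section Irreducible

theorem bijective_of_ne_zero_of_isIrreducible {R L M N : Type*} [CommRing R] [LieRing L]
    [AddCommGroup M] [Module R M] [LieRingModule L M] [IsIrreducible R L M]
    [AddCommGroup N] [Module R N] [LieRingModule L N] [IsIrreducible R L N]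
    {f : M →ₗ⁅R,L⁆ N} (hf : f ≠ 0) : Function.Bijective f := by
  have ker_ne_top : f.ker ≠ ⊤ := fun h ↦
    hf <| LieModuleHom.ext fun m ↦ LieModuleHom.mem_ker.mp (h ▸ LieSubmodule.mem_top m)
  have range_ne_bot : f.range ≠ ⊥ := fun h ↦
    hf <| LieModuleHom.ext fun m ↦ (LieSubmodule.eq_bot_iff _).mp h _ ⟨m, rfl⟩
  exact ⟨f.ker_eq_bot.mp ((eq_bot_or_eq_top _).resolve_right ker_ne_top),
    f.range_eq_top.mp ((eq_bot_or_eq_top _).resolve_left range_ne_bot)⟩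

theorem isTrivial_of_isIrreducible_of_isNilpotent (R L M : Type*) [CommRing R] [LieRing L]
    [LieAlgebra R L] [AddCommGroup M] [Module R M] [LieRingModule L M] [LieModule R L M]
    [IsIrreducible R L M] [LieModule.IsNilpotent L M] : IsTrivial L M := by
  have := nontrivial_of_isIrreducible R L M
  have := nontrivial_max_triv_of_isNilpotent R L M
  exact (isTrivial_iff_max_triv_eq_top R L M).mpr (LieSubmodule.eq_top_of_isIrreducible R L M _)

end Irreducible

section Semisimple

theorem isKilling_of_nondegenerate_killingForm {R L : Type*} [CommRing R] [LieRing L]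
    [LieAlgebra R L] (h : (killingForm R L).Nondegenerate) : IsKilling R L where
  killingCompl_top_eq_bot := by
    rw [← LieSubmodule.toSubmodule_eq_bot]
    exact (LieIdeal.coe_killingCompl_top R L).trans
      (LinearMap.separatingLeft_iff_ker_eq_bot.mp h.1)

theorem derivedSeries_one_eq_top_of_isSemisimple (R L : Type*) [CommRing R] [LieRing L]
    [LieAlgebra R L] [IsSemisimple R L] : derivedSeries R L 1 = ⊤ := by
  obtain ⟨J, hJ⟩ := exists_isCompl (derivedSeries R L 1)
  have lie_self_eq_bot : ⁅J, J⁆ = ⊥ := by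
    rw [eq_bot_iff, ← hJ.inf_eq_bot]
    exact le_inf (LieSubmodule.mono_lie le_top le_top) (LieSubmodule.lie_le_right J J)
  have eq_bot : J = ⊥ := (hasTrivialRadical_iff_no_abelian_ideals R L).mp inferInstance J
    ((LieSubmodule.lie_abelian_iff_lie_self_eq_bot J).mpr lie_self_eq_bot)
  simpa [eq_bot] using hJ.sup_eq_top

theorem isNilpotent_of_traceForm_eq_zero {k L M : Type*} [Field k] [CharZero k] [LieRing L]
    [LieAlgebra k L] [AddCommGroup M] [Module k M] [LieRingModule L M] [LieModule k L M]
    [FiniteDimensional k M] (hL : derivedSeries k L 1 = ⊤) (h : traceForm k L M = 0) :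
    LieModule.IsNilpotent L M := by
  have toEnd_isNilpotent := (isNilpotent_iff_forall' (R := k)).mp
    (isNilpotent_derivedSeries_of_traceForm_eq_zero h)
  exact (isNilpotent_iff_forall' (R := k)).mpr fun x ↦
    toEnd_isNilpotent ⟨x, hL ▸ LieSubmodule.mem_top x⟩

theorem exists_lieIdeal_isCompl_ker {R L : Type*} [CommRing R] [LieRing L] [LieAlgebra R L]
    [IsSemisimple R L] {Φ : LinearMap.BilinForm R L} (hΦ : Φ.IsRefl) (hΦL : Φ.lieInvariant L) :
    ∃ I : LieIdeal R L, IsCompl I.toSubmodule Φ.ker := by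
  obtain ⟨I, hI⟩ := exists_isCompl (InvariantForm.orthogonal Φ hΦL ⊤)
  refine ⟨I, ?_⟩
  have := (LieSubmodule.isCompl_toSubmodule.mpr hI).symm
  simpa [LinearMap.BilinForm.orthogonal_top_eq_ker hΦ] using this

theorem finiteDimensional_of_disjoint_ker_traceForm {k L M : Type*} [Field k] [LieRing L]
    [LieAlgebra k L] [AddCommGroup M] [Module k M] [LieRingModule L M] [LieModule k L M]
    [FiniteDimensional k M] {I : Submodule k L} (hI : Disjoint I (traceForm k L M).ker) :
    FiniteDimensional k I := by
  have ker_toEnd_le : (toEnd k L M : L →ₗ[k] End k M).ker ≤ (traceForm k L M).ker := by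
    intro x hx
    ext y
    have hx : toEnd k L M x = 0 := hx
    simp [traceForm_apply_apply, hx]
  exact .of_injective ((toEnd k L M : L →ₗ[k] End k M).domRestrict I)
    (LinearMap.injective_domRestrict_iff.mpr (hI.mono_right ker_toEnd_le))

variable {k L M : Type*} [Field k] [CharZero k] [LieRing L] [LieAlgebra k L] [IsSemisimple k L]
  [AddCommGroup M] [Module k M] [LieRingModule L M] [LieModule k L M] [FiniteDimensional k M]

theorem exists_lie_eq_zero_and_casimirOperator_ne_zero (h : traceForm k L M ≠ 0) :
    ∃ t : L ⊗[k] L, (∀ x : L, ⁅x, t⁆ = 0) ∧ casimirOperator M t ≠ 0 := by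
  have symm := traceForm_isSymm k L M
  have invariant := traceForm_lieInvariant k L M
  obtain ⟨I, hI⟩ := exists_lieIdeal_isCompl_ker symm.isRefl invariant
  have : FiniteDimensional k I := finiteDimensional_of_disjoint_ker_traceForm hI.disjoint
  have I_ne_bot : I.toSubmodule ≠ ⊥ := fun hbot ↦
    h (LinearMap.ker_eq_top.mp (by simpa [hbot] using hI.sup_eq_top))
  obtain ⟨t, ht, lift_t⟩ := exists_lie_eq_zero_and_lift_eq_finrank (L := L) (V := I)
    (symm.nondegenerate_restrict_of_isCompl_ker hI) (fun x y z ↦ invariant x y z)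
  refine ⟨TensorProduct.LieModule.mapIncl I I t, fun x ↦ ?_, fun casimir_eq_zero ↦ I_ne_bot ?_⟩
  · rw [← LieModuleHom.map_lie, ht, map_zero]
  · have finrank_eq_zero : (finrank k I : k) = 0 := by
      rw [← lift_t]
      refine (trace_casimirOperator_mapIncl (M := M) I t).symm.trans ?_
      rw [casimir_eq_zero, map_zero]
    exact Submodule.finrank_eq_zero.mp (Nat.cast_eq_zero.mp finrank_eq_zero)

theorem inner_surjective_of_isIrreducible [IsIrreducible k L M] :
    Function.Surjective (LieDerivation.inner k L M) := by
  have perfect := derivedSeries_one_eq_top_of_isSemisimple k L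
  by_cases h : traceForm k L M = 0
  · have := isNilpotent_of_traceForm_eq_zero perfect h
    have := isTrivial_of_isIrreducible_of_isNilpotent k L M
    exact fun D ↦ ⟨0, by rw [derivation_eq_zero_of_isTrivial perfect D, map_zero]⟩
  · obtain ⟨t, ht, hC⟩ := exists_lie_eq_zero_and_casimirOperator_ne_zero h
    have casimirHom_ne_zero : casimirHom M ht ≠ 0 := fun h0 ↦
      hC (congrArg LieModuleHom.toLinearMap h0)
    exact inner_surjective_of_casimirOperator_bijective ht
      (bijective_of_ne_zero_of_isIrreducible casimirHom_ne_zero)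

end Semisimple

theorem stmt_5_general (k : Type*) [Field k] [CharZero k]
    (L : Type*) [LieRing L] [LieAlgebra k L] [IsSemisimple k L]
    (M : Type*) [AddCommGroup M] [Module k M] [LieRingModule L M] [LieModule k L M]
    [FiniteDimensional k M] : Function.Surjective (LieDerivation.inner k L M) := by
  induction hn : finrank k M using Nat.strong_induction_on generalizing M with
  | _ n ih =>
    subst hn
    rcases subsingleton_or_nontrivial M with _ | _
    · exact fun D ↦ ⟨0, LieDerivation.ext fun x ↦ Subsingleton.elim _ _⟩
    by_cases reducible : ∃ P : LieSubmodule k L M, P ≠ ⊥ ∧ P ≠ ⊤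
    · obtain ⟨P, P_ne_bot, P_ne_top⟩ := reducible
      have finrank_P_lt : finrank k P < finrank k M :=
        Submodule.finrank_lt (by simpa using P_ne_top)
      have finrank_P_pos : 1 ≤ finrank k P :=
        Submodule.one_le_finrank_iff.mpr (by simpa using P_ne_bot)
      have finrank_quotient_lt : finrank k (M ⧸ P) < finrank k M := by
        have : finrank k (M ⧸ P) + finrank k P = finrank k M :=
          Submodule.finrank_quotient_add_finrank P.toSubmodule
        omega
      exact inner_surjective_of_quotient P (ih _ finrank_P_lt P rfl)
        (ih _ finrank_quotient_lt (M ⧸ P) rfl)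
    · push Not at reducible
      have : IsIrreducible k L M := .mk reducible
      exact inner_surjective_of_isIrreducible

/-- Whitehead's first lemma: for a finite-dimensional Lie algebra `g` with
nondegenerate Killing form over a field of characteristic zero and a
finite-dimensional `g`-module `M`, every 1-cocycle `d : g → M`
(`d ⁅x, y⁆ = x • d y − y • d x`) is a coboundary (`d x = x • m`). -/
theorem stmt_5 (k : Type*) [Field k] [CharZero k]
    (g : Type*) [LieRing g] [LieAlgebra k g] [FiniteDimensional k g]
    (hKilling : (killingForm k g).Nondegenerate)
    (M : Type*) [AddCommGroup M] [Module k M] [LieRingModule g M] [LieModule k g M]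
    [FiniteDimensional k M]
    (d : g →ₗ[k] M) (hd : ∀ x y : g, d ⁅x, y⁆ = ⁅x, d y⁆ - ⁅y, d x⁆) :
    ∃ m : M, ∀ x : g, d x = ⁅x, m⁆ := by
  have := isKilling_of_nondegenerate_killingForm hKilling
  obtain ⟨m, hm⟩ := stmt_5_general k g M { toLinearMap := d, leibniz' := hd }
  exact ⟨m, fun x ↦ (LieDerivation.congr_fun hm x).symm⟩
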